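/- arXiv:1310.3866 — 2 statements merged into one kernel-verified Lean document; each statement's English description precedes it below -/
import Mathlib

section
/- Let $p \in (1,\infty)$, $\delta > 0$, $\alpha, \beta \in \mathbb{R}$ with $\alpha \ge 0$, and suppose $p(2p/\delta)^p \alpha < 1$. Let $V : \mathbb{R}^d \to \mathbb{R}$ be continuous with $V(x) \le \alpha |x - y_0|^p + \beta$ for all $x$ and some fixed $y_0 \in \mathbb{R}^d$. Define $u(x) = \inf \int_0^\infty e^{-\delta t} (\frac{1}{p}|\dot\gamma(t)|^p - V(\gamma(t))) dt$ over locally absolutely continuous $\gamma$ with $\gamma(0)=x$ and $\int_0^\infty e^{-\delta t}|\dot\gamma|^p dt < \infty$. Then $-\frac{1}{\delta}(\beta + 2^p \alpha |x - y_0|^p) \le u(x) \le -\frac{1}{\delta} V(x)$ for every $x \in \mathbb{R}^d$. In particular $u(x) > -\infty$. -/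
/-!
The upper bound is the action of the constant path at `x`, which is `-V x / δ`
(`const_mem_actionSet`).

For the lower bound, the growth condition and
`‖γ - y₀‖ ^ p ≤ 2 ^ p (‖γ - x‖ ^ p + ‖x - y₀‖ ^ p)` bound the potential term of the action by
`α 2 ^ p ∫ e^{-δt} ‖γ - x‖ ^ p` plus the constant `(β + 2 ^ p α ‖x - y₀‖ ^ p) / δ`. The weighted
Poincaré inequality (`IsACPath.poincare`) bounds that integral by `(p / δ) ^ p` times the kinetic
energy, and the smallness condition lets the kinetic term `1 / p ∫ e^{-δt} ‖γ'‖ ^ p` absorb it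
(`le_action`).

The Poincaré inequality follows from a Hardy-type inequality for primitives of `ℝ≥0∞`-valued
functions (`lintegral_exp_mul_primitive_rpow_le`). Inserting the weight `e^{-as} e^{as}` with
`a = δ (p - 1) / p ^ 2` in `∫_0^t g`, Hölder's inequality gives a pointwise bound
(`lintegral_rpow_le`); integrating it against `e^{-δt}` and exchanging the integrals by Tonelli
gives the constant `(p / δ) ^ p`. Working with lower Lebesgue integrals means that integrability
of `e^{-δt} ‖γ - x‖ ^ p` is a consequence and need not be known beforehand.
-/


open MeasureTheory Set

noncomputable section

/-- A pair `(γ, γ')` is an `AC_{p,δ}` path: `γ` is locally absolutely continuous on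
`[0,∞)` with a.e. derivative `γ'` (encoded via the fundamental theorem of calculus),
and the discounted kinetic energy `∫_0^∞ e^{-δ t} ‖γ'‖^p dt` is finite. -/
def IsACPath {d : ℕ} (p δ : ℝ) (γ γ' : ℝ → EuclideanSpace ℝ (Fin d)) : Prop :=
  (∀ s t : ℝ, 0 ≤ s → s ≤ t →
      IntervalIntegrable γ' volume s t ∧ γ t - γ s = ∫ r in s..t, γ' r) ∧
  Integrable (fun t => Real.exp (-δ * t) * ‖γ' t‖ ^ p) (volume.restrict (Set.Ioi 0))

/-- The infinite-horizon discounted action of a path. -/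
def action {d : ℕ} (p δ : ℝ) (V : EuclideanSpace ℝ (Fin d) → ℝ)
    (γ γ' : ℝ → EuclideanSpace ℝ (Fin d)) : ℝ :=
  ∫ t in Set.Ioi (0:ℝ), Real.exp (-δ * t) * ((1/p) * ‖γ' t‖ ^ p - V (γ t))

/-- The set of values of the action over admissible paths starting at `x`. -/
def actionSet {d : ℕ} (p δ : ℝ) (V : EuclideanSpace ℝ (Fin d) → ℝ)
    (x : EuclideanSpace ℝ (Fin d)) : Set ℝ :=
  {A | ∃ γ γ' : ℝ → EuclideanSpace ℝ (Fin d), IsACPath p δ γ γ' ∧ γ 0 = x ∧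
    IntegrableOn (fun t => Real.exp (-δ * t) * ((1/p) * ‖γ' t‖ ^ p - V (γ t))) (Set.Ioi 0) ∧
    A = action p δ V γ γ'}

/-- The infinite-horizon value function `u(x)`. -/
def val {d : ℕ} (p δ : ℝ) (V : EuclideanSpace ℝ (Fin d) → ℝ)
    (x : EuclideanSpace ℝ (Fin d)) : ℝ :=
  sInf (actionSet p δ V x)

lemma lintegral_exp_mul_Iic {b : ℝ} (hb : 0 < b) (t : ℝ) :
    ∫⁻ s in Iic t, ENNReal.ofReal (Real.exp (b * s)) = ENNReal.ofReal (Real.exp (b * t) / b) := by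
  rw [← integral_exp_mul_Iic hb, ofReal_integral_eq_lintegral_ofReal (integrableOn_exp_mul_Iic hb t)]
  exact Filter.Eventually.of_forall fun s => (Real.exp_pos _).le

lemma lintegral_exp_neg_mul_Ioi {b : ℝ} (hb : 0 < b) (t : ℝ) :
    ∫⁻ s in Ioi t, ENNReal.ofReal (Real.exp (-b * s))
      = ENNReal.ofReal (Real.exp (-b * t) / b) := by
  have hb' : -b < 0 := by linarith
  have h := integral_exp_mul_Ioi hb' t
  rw [neg_div_neg_eq] at h
  rw [← h, ofReal_integral_eq_lintegral_ofReal (integrableOn_exp_mul_Ioi hb' t)]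
  exact Filter.Eventually.of_forall fun s => (Real.exp_pos _).le

/-- Hölder's inequality for `∫_0^t g = ∫_0^t (g e^{-as}) e^{as}` with `a = b (p - 1) / p`, so that
`a q = b` for the exponent `q` conjugate to `p`. -/
lemma lintegral_rpow_le {p b : ℝ} (hp : 1 < p) (hb : 0 < b) {g : ℝ → ENNReal}
    (hg : AEMeasurable g (volume.restrict (Ioi 0))) (t : ℝ) :
    (∫⁻ s in Ioc 0 t, g s) ^ p ≤
      ENNReal.ofReal (b⁻¹ ^ (p - 1) * Real.exp (b * (p - 1) * t)) *
        ∫⁻ s in Ioc 0 t, ENNReal.ofReal (Real.exp (-(b * (p - 1)) * s)) * g s ^ p := by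
  have hp0 : 0 < p := by linarith
  have hp1 : 0 < p - 1 := by linarith
  have hpq := Real.HolderConjugate.conjExponent hp
  set q := Real.conjExponent p with hq
  have hqe : q = p / (p - 1) := rfl
  have hq0 : 0 < q := hpq.symm.pos
  set a : ℝ := b * (p - 1) / p with ha
  have hap : a * p = b * (p - 1) := by rw [ha]; field_simp
  have haq : a * q = b := by rw [ha, hqe]; field_simp
  have hgt : AEMeasurable g (volume.restrict (Ioc 0 t)) :=
    hg.mono_measure (Measure.restrict_mono Ioc_subset_Ioi_self le_rfl)
  have hf : AEMeasurable (fun s => ENNReal.ofReal (Real.exp (-a * s)) * g s)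
      (volume.restrict (Ioc 0 t)) := by fun_prop
  have hh : AEMeasurable (fun s => ENNReal.ofReal (Real.exp (a * s)))
      (volume.restrict (Ioc 0 t)) := by fun_prop
  have key := ENNReal.lintegral_mul_le_Lp_mul_Lq _ hpq hf hh
  have e1 : ∫⁻ s in Ioc 0 t, g s = ∫⁻ s in Ioc 0 t,
      ((fun s => ENNReal.ofReal (Real.exp (-a * s)) * g s) *
        (fun s => ENNReal.ofReal (Real.exp (a * s)))) s := by
    refine lintegral_congr fun s => ?_
    simp only [Pi.mul_apply]
    rw [mul_right_comm, ← ENNReal.ofReal_mul (Real.exp_pos _).le, ← Real.exp_add]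
    simp
  have e2 : ∀ s, (ENNReal.ofReal (Real.exp (-a * s)) * g s) ^ p
      = ENNReal.ofReal (Real.exp (-(b * (p - 1)) * s)) * g s ^ p := fun s => by
    rw [ENNReal.mul_rpow_of_nonneg _ _ hp0.le,
      ENNReal.ofReal_rpow_of_nonneg (Real.exp_pos _).le hp0.le, ← Real.exp_mul, ← hap]
    congr 3; ring
  have e3 : ∀ s, (ENNReal.ofReal (Real.exp (a * s))) ^ q
      = ENNReal.ofReal (Real.exp (b * s)) := fun s => by
    rw [ENNReal.ofReal_rpow_of_nonneg (Real.exp_pos _).le hq0.le, ← Real.exp_mul, ← haq]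
    congr 2; ring
  rw [← e1] at key
  simp only [e2, e3] at key
  have e4 : ∫⁻ s in Ioc 0 t, ENNReal.ofReal (Real.exp (b * s))
      ≤ ENNReal.ofReal (Real.exp (b * t) / b) :=
    (lintegral_mono_set Ioc_subset_Iic_self).trans (lintegral_exp_mul_Iic hb t).le
  calc _ ≤ _ := ENNReal.rpow_le_rpow key hp0.le
    _ = (∫⁻ s in Ioc 0 t, ENNReal.ofReal (Real.exp (b * s))) ^ (p - 1) *
        ∫⁻ s in Ioc 0 t, ENNReal.ofReal (Real.exp (-(b * (p - 1)) * s)) * g s ^ p := by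
      rw [ENNReal.mul_rpow_of_nonneg _ _ hp0.le, ← ENNReal.rpow_mul, ← ENNReal.rpow_mul,
        one_div_mul_cancel hp0.ne', ENNReal.rpow_one, mul_comm]
      congr 2
      rw [hqe]; field_simp
    _ ≤ _ := by
      gcongr
      refine (ENNReal.rpow_le_rpow e4 hp1.le).trans_eq ?_
      rw [ENNReal.ofReal_rpow_of_nonneg (by positivity) hp1.le, div_eq_inv_mul,
        Real.mul_rpow (by positivity) (by positivity), ← Real.exp_mul]
      congr 3; ring

/-- A Hardy inequality with exponential weight: the pointwise Hölder bound `lintegral_rpow_le` with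
`b = δ / p`, integrated against `e^{-δt}` using Tonelli's theorem. -/
theorem lintegral_exp_mul_primitive_rpow_le {p δ : ℝ} (hp : 1 < p) (hδ : 0 < δ) {g : ℝ → ENNReal}
    (hg : AEMeasurable g (volume.restrict (Ioi 0))) :
    ∫⁻ t in Ioi 0, ENNReal.ofReal (Real.exp (-δ * t)) * (∫⁻ s in Ioc 0 t, g s) ^ p ≤
      ENNReal.ofReal ((p / δ) ^ p) *
        ∫⁻ t in Ioi 0, ENNReal.ofReal (Real.exp (-δ * t)) * g t ^ p := by
  have hp0 : 0 < p := by linarith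
  set b : ℝ := δ / p with hbdef
  have hb : 0 < b := by positivity
  have hbp : b * p = δ := by rw [hbdef]; field_simp
  set C : ℝ := b⁻¹ ^ (p - 1) with hC
  have hC0 : 0 ≤ C := by positivity
  have hCb : C * b⁻¹ = (p / δ) ^ p := by
    rw [hC, ← Real.rpow_add_one (by positivity), hbdef, inv_div, sub_add_cancel]
  set k : ℝ → ENNReal := fun s => ENNReal.ofReal (Real.exp (-(b * (p - 1)) * s)) * g s ^ p with hk
  have hkm : AEMeasurable k (volume.restrict (Ioi 0)) := by fun_prop
  -- Pointwise bound for the integrand at time `t`, as an integral over `s`; the indicator encodes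
  -- `s ≤ t`, so that both variables range over `(0, ∞)`.
  let F : ℝ → ℝ → ENNReal := fun t s =>
    ENNReal.ofReal (C * Real.exp (-b * t)) * (Iic t).indicator k s
  have hF : AEMeasurable (Function.uncurry F)
      ((volume.restrict (Ioi 0)).prod (volume.restrict (Ioi 0))) := by
    have h1 : AEMeasurable (fun z : ℝ × ℝ => k z.2)
      ((volume.restrict (Ioi (0:ℝ))).prod (volume.restrict (Ioi 0))) := hkm.comp_snd
    have h2 : MeasurableSet {z : ℝ × ℝ | z.2 ≤ z.1} :=
      measurableSet_le measurable_snd measurable_fst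
    have h3 := h1.indicator h2
    have h4 : AEMeasurable (fun z : ℝ × ℝ => ENNReal.ofReal (C * Real.exp (-b * z.1)))
      ((volume.restrict (Ioi (0:ℝ))).prod (volume.restrict (Ioi 0))) := by fun_prop
    exact h4.mul h3
  have hinner : ∀ s, 0 < s → ∫⁻ t in Ioi 0, F t s =
      ENNReal.ofReal ((p / δ) ^ p) * (ENNReal.ofReal (Real.exp (-δ * s)) * g s ^ p) := by
    intro s hs
    have e : ∀ t, F t s = (Ici s).indicator
        (fun t => ENNReal.ofReal (Real.exp (-b * t)) * (ENNReal.ofReal C * k s)) t := by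
      intro t
      by_cases hst : s ≤ t
      · simp only [F, indicator, mem_Iic, mem_Ici, hst, if_true]
        rw [ENNReal.ofReal_mul hC0]; ring
      · simp [F, indicator, hst]
    simp only [e]
    rw [lintegral_indicator measurableSet_Ici, Measure.restrict_restrict measurableSet_Ici,
      inter_eq_left.2 (Ici_subset_Ioi.2 hs),
      lintegral_mul_const _ (by fun_prop), Measure.restrict_congr_set Ioi_ae_eq_Ici.symm,
      lintegral_exp_neg_mul_Ioi hb, hk]
    simp only
    rw [← mul_assoc, ← mul_assoc, ← mul_assoc, ← ENNReal.ofReal_mul (by positivity),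
      ← ENNReal.ofReal_mul (by positivity), ← ENNReal.ofReal_mul (by positivity), ← hCb]
    congr 2
    rw [show -δ * s = -b * s + -(b * (p - 1)) * s by rw [← hbp]; ring, Real.exp_add]
    ring
  calc ∫⁻ t in Ioi 0, ENNReal.ofReal (Real.exp (-δ * t)) * (∫⁻ s in Ioc 0 t, g s) ^ p
      ≤ ∫⁻ t in Ioi 0, ∫⁻ s in Ioi 0, F t s := by
        refine lintegral_mono fun t => ?_
        have hFt : ∫⁻ s in Ioi 0, F t s
            = ENNReal.ofReal (C * Real.exp (-b * t)) * ∫⁻ s in Ioc 0 t, k s := by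
          simp only [F]
          rw [lintegral_const_mul' _ _ ENNReal.ofReal_ne_top, lintegral_indicator measurableSet_Iic,
            Measure.restrict_restrict measurableSet_Iic, inter_comm, Ioi_inter_Iic]
        simp only
        rw [hFt]
        calc _ ≤ _ := mul_le_mul_right (lintegral_rpow_le hp hb hg t) _
          _ = _ := by
            rw [← mul_assoc, ← ENNReal.ofReal_mul (by positivity)]
            congr 2
            rw [show -b * t = -δ * t + b * (p - 1) * t by rw [← hbp]; ring, Real.exp_add]
            ring
    _ = ∫⁻ s in Ioi 0, ∫⁻ t in Ioi 0, F t s := lintegral_lintegral_swap hF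
    _ = ∫⁻ s in Ioi 0, ENNReal.ofReal ((p / δ) ^ p) *
          (ENNReal.ofReal (Real.exp (-δ * s)) * g s ^ p) :=
        setLIntegral_congr_fun measurableSet_Ioi fun s hs => hinner s hs
    _ = _ := lintegral_const_mul' _ _ ENNReal.ofReal_ne_top

lemma IsACPath.continuousOn {d : ℕ} {p δ : ℝ} {γ γ' : ℝ → EuclideanSpace ℝ (Fin d)}
    (h : IsACPath p δ γ γ') : ContinuousOn γ (Ioi 0) := by
  intro t ht
  have ht : 0 < t := ht
  have hc := intervalIntegral.continuousOn_primitive_interval' (h.1 0 (t + 1) le_rfl (by linarith)).1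
    left_mem_uIcc
  rw [uIcc_of_le (by linarith)] at hc
  have hc2 : ContinuousOn γ (Icc 0 (t + 1)) := by
    refine (hc.const_add (γ 0)).congr fun s hs => ?_
    simp only
    rw [← (h.1 0 s le_rfl hs.1).2]; abel
  exact (hc2.continuousAt (Icc_mem_nhds ht (by linarith))).continuousWithinAt

/-- The weighted Poincaré inequality. Since `‖γ t - γ 0‖ ≤ ∫_0^t ‖γ'‖`, it follows from the Hardy
inequality applied to `‖γ'‖`. -/
lemma IsACPath.poincare {d : ℕ} {p δ : ℝ} (hp : 1 < p) (hδ : 0 < δ)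
    {γ γ' : ℝ → EuclideanSpace ℝ (Fin d)} (h : IsACPath p δ γ γ') :
    IntegrableOn (fun t => Real.exp (-δ * t) * ‖γ t - γ 0‖ ^ p) (Ioi 0) ∧
      ∫ t in Ioi 0, Real.exp (-δ * t) * ‖γ t - γ 0‖ ^ p ≤
        (p / δ) ^ p * ∫ t in Ioi 0, Real.exp (-δ * t) * ‖γ' t‖ ^ p := by
  have hp0 : 0 < p := by linarith
  have hm : AEMeasurable (fun t => ‖γ' t‖ₑ) (volume.restrict (Ioi 0)) := by
    -- `‖γ'‖` is recovered from the discounted kinetic energy density, which is measurable.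
    have h1 := h.2.aestronglyMeasurable.aemeasurable
    have h2 : AEMeasurable (fun t => ENNReal.ofReal
        ((Real.exp (δ * t) * (Real.exp (-δ * t) * ‖γ' t‖ ^ p)) ^ (1 / p)))
        (volume.restrict (Ioi 0)) := by fun_prop
    convert h2 using 2 with t
    rw [← mul_assoc, ← Real.exp_add, neg_mul, add_neg_cancel, Real.exp_zero, one_mul,
      ← Real.rpow_mul (norm_nonneg _), mul_one_div_cancel hp0.ne', Real.rpow_one, ofReal_norm]
  have hardy := lintegral_exp_mul_primitive_rpow_le hp hδ hm
  have conv : ∀ (t : ℝ) (v : EuclideanSpace ℝ (Fin d)),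
      ENNReal.ofReal (Real.exp (-δ * t)) * ‖v‖ₑ ^ p
        = ENNReal.ofReal (Real.exp (-δ * t) * ‖v‖ ^ p) := fun t v => by
    rw [ENNReal.ofReal_mul (Real.exp_pos _).le, ← ENNReal.ofReal_rpow_of_nonneg (norm_nonneg _) hp0.le,
      ofReal_norm]
  have nn : ∀ w : ℝ → EuclideanSpace ℝ (Fin d), 0 ≤ᵐ[volume.restrict (Ioi 0)]
      fun t => Real.exp (-δ * t) * ‖w t‖ ^ p := fun w =>
    Filter.Eventually.of_forall fun t => by positivity
  set K := ∫ t in Ioi 0, Real.exp (-δ * t) * ‖γ' t‖ ^ p with hK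
  have hle : ∫⁻ t in Ioi 0, ENNReal.ofReal (Real.exp (-δ * t) * ‖γ t - γ 0‖ ^ p)
      ≤ ENNReal.ofReal ((p / δ) ^ p * K) := by
    rw [ENNReal.ofReal_mul (by positivity), hK, ofReal_integral_eq_lintegral_ofReal h.2 (nn γ')]
    simp only [← conv]
    refine le_trans (setLIntegral_mono' measurableSet_Ioi fun t ht => ?_) hardy
    have ht : 0 < t := ht
    gcongr
    rw [(h.1 0 t le_rfl ht.le).2, intervalIntegral.integral_of_le ht.le]
    exact enorm_integral_le_lintegral_enorm _
  have hmeas : AEStronglyMeasurable (fun t => Real.exp (-δ * t) * ‖γ t - γ 0‖ ^ p)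
      (volume.restrict (Ioi 0)) := by
    have := (h.continuousOn.aestronglyMeasurable measurableSet_Ioi (μ := volume)).aemeasurable
    exact AEMeasurable.aestronglyMeasurable (by fun_prop)
  have hK0 : 0 ≤ K := integral_nonneg fun t => by positivity
  refine ⟨⟨hmeas, ?_⟩, ?_⟩
  · rw [hasFiniteIntegral_iff_ofReal (nn fun t => γ t - γ 0)]
    exact hle.trans_lt ENNReal.ofReal_lt_top
  · rw [integral_eq_lintegral_of_nonneg_ae (nn fun t => γ t - γ 0) hmeas]
    exact ENNReal.toReal_le_of_le_ofReal (by positivity) hle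

lemma norm_sub_rpow_le {E : Type*} [SeminormedAddCommGroup E] {p : ℝ} (hp : 0 ≤ p) (x y z : E) :
    ‖x - z‖ ^ p ≤ 2 ^ p * (‖x - y‖ ^ p + ‖y - z‖ ^ p) := by
  have h1 : ‖x - z‖ ≤ 2 * max ‖x - y‖ ‖y - z‖ := by
    linarith [norm_sub_le_norm_sub_add_norm_sub x y z, le_max_left ‖x - y‖ ‖y - z‖,
      le_max_right ‖x - y‖ ‖y - z‖]
  refine (Real.rpow_le_rpow (norm_nonneg _) h1 hp).trans ?_
  rw [Real.mul_rpow (by norm_num) (by positivity)]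
  gcongr
  rcases max_choice ‖x - y‖ ‖y - z‖ with h | h <;> rw [h]
  · exact le_add_of_nonneg_right (by positivity)
  · exact le_add_of_nonneg_left (by positivity)

/-- Lower bound for the action of a single path: the potential part is absorbed by the kinetic
energy through the Poincaré inequality and the smallness condition. -/
lemma le_action {d : ℕ} {p δ α β : ℝ} (hp : 1 < p) (hδ : 0 < δ) (hα : 0 ≤ α)
    (hsmall : p * (2 * p / δ) ^ p * α < 1)
    {V : EuclideanSpace ℝ (Fin d) → ℝ} {y₀ : EuclideanSpace ℝ (Fin d)}
    (hgrowth : ∀ x, V x ≤ α * ‖x - y₀‖ ^ p + β)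
    {γ γ' : ℝ → EuclideanSpace ℝ (Fin d)} (hγ : IsACPath p δ γ γ')
    (hint : IntegrableOn (fun t => Real.exp (-δ * t) * ((1/p) * ‖γ' t‖ ^ p - V (γ t))) (Ioi 0)) :
    -(1/δ) * (β + 2 ^ p * α * ‖γ 0 - y₀‖ ^ p) ≤ action p δ V γ γ' := by
  have hp0 : 0 < p := by linarith
  obtain ⟨hJint, hJ⟩ := hγ.poincare hp hδ
  set K := ∫ t in Ioi 0, Real.exp (-δ * t) * ‖γ' t‖ ^ p with hK
  set J := ∫ t in Ioi 0, Real.exp (-δ * t) * ‖γ t - γ 0‖ ^ p with hJdef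
  set c := β + 2 ^ p * α * ‖γ 0 - y₀‖ ^ p with hc
  have hK0 : 0 ≤ K := integral_nonneg fun t => by positivity
  have i1 := hγ.2.const_mul (1 / p)
  have i2 := hJint.const_mul (α * 2 ^ p)
  have i3 : IntegrableOn (fun t => c * Real.exp (-δ * t)) (Ioi 0) :=
    (integrableOn_exp_mul_Ioi (by linarith) 0).const_mul c
  have hexp : ∫ t in Ioi (0:ℝ), Real.exp (-δ * t) = 1 / δ := by
    rw [integral_exp_mul_Ioi (by linarith)]; simp [neg_div_neg_eq]
  have hmono : ∫ t in Ioi 0, (1 / p * (Real.exp (-δ * t) * ‖γ' t‖ ^ p)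
      - α * 2 ^ p * (Real.exp (-δ * t) * ‖γ t - γ 0‖ ^ p) - c * Real.exp (-δ * t))
      ≤ action p δ V γ γ' := by
    refine integral_mono ((i1.sub i2).sub i3) hint fun t => ?_
    have hV : V (γ t) ≤ α * 2 ^ p * ‖γ t - γ 0‖ ^ p + c := by
      have := mul_le_mul_of_nonneg_left (norm_sub_rpow_le hp0.le (γ t) (γ 0) y₀) hα
      linarith [hgrowth (γ t)]
    have := mul_le_mul_of_nonneg_left hV (Real.exp_pos (-δ * t)).le
    simp only
    linarith
  have hval : ∫ t in Ioi 0, (1 / p * (Real.exp (-δ * t) * ‖γ' t‖ ^ p)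
      - α * 2 ^ p * (Real.exp (-δ * t) * ‖γ t - γ 0‖ ^ p) - c * Real.exp (-δ * t))
      = 1 / p * K - α * 2 ^ p * J - c * (1 / δ) := by
    have i12 : Integrable (fun t => 1 / p * (Real.exp (-δ * t) * ‖γ' t‖ ^ p)
        - α * 2 ^ p * (Real.exp (-δ * t) * ‖γ t - γ 0‖ ^ p)) (volume.restrict (Ioi 0)) := i1.sub i2
    rw [integral_sub i12 i3, integral_sub i1 i2, integral_const_mul, integral_const_mul,
      integral_const_mul, hexp]
  rw [hval] at hmono
  have habs : α * 2 ^ p * J ≤ 1 / p * K := by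
    have h2 : (2 * p / δ) ^ p = 2 ^ p * (p / δ) ^ p := by
      rw [mul_div_assoc, Real.mul_rpow (by norm_num) (by positivity)]
    have h3 : α * 2 ^ p * (p / δ) ^ p ≤ 1 / p := by
      rw [le_div_iff₀ hp0]; rw [h2] at hsmall; linarith
    calc α * 2 ^ p * J ≤ α * 2 ^ p * ((p / δ) ^ p * K) := by gcongr
      _ = α * 2 ^ p * (p / δ) ^ p * K := by ring
      _ ≤ _ := by gcongr
  linarith

/-- The constant path at `x` is admissible, with action `-V x / δ`. -/
lemma const_mem_actionSet {d : ℕ} {p δ : ℝ} (hp : 0 < p) (hδ : 0 < δ)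
    (V : EuclideanSpace ℝ (Fin d) → ℝ) (x : EuclideanSpace ℝ (Fin d)) :
    -(1/δ) * V x ∈ actionSet p δ V x := by
  have hi : IntegrableOn (fun t : ℝ => Real.exp (-δ * t)) (Ioi 0) :=
    integrableOn_exp_mul_Ioi (by linarith) 0
  refine ⟨fun _ => x, fun _ => 0, ⟨fun s t _ _ => ⟨by simp, by simp⟩, ?_⟩, rfl, ?_, ?_⟩
  · simp [Real.zero_rpow hp.ne']
  · exact hi.mul_const _
  · rw [action, integral_mul_const, integral_exp_mul_Ioi (by linarith)]
    simp [Real.zero_rpow hp.ne', neg_div_neg_eq]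

/-- Bounds on the classical infinite-horizon value function: under the growth condition
`V x ≤ α ‖x - y₀‖^p + β` and the smallness condition `p (2p/δ)^p α < 1`,
`-(1/δ)(β + 2^p α ‖x - y₀‖^p) ≤ u(x) ≤ -(1/δ) V x` for every `x`. -/
theorem val_bounds {d : ℕ} (p δ α β : ℝ) (hp : 1 < p) (hδ : 0 < δ) (hα : 0 ≤ α)
    (hsmall : p * (2 * p / δ) ^ p * α < 1)
    (V : EuclideanSpace ℝ (Fin d) → ℝ) (hV : Continuous V)
    (y₀ : EuclideanSpace ℝ (Fin d))
    (hgrowth : ∀ x, V x ≤ α * ‖x - y₀‖ ^ p + β) :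
    ∀ x : EuclideanSpace ℝ (Fin d),
      -(1/δ) * (β + 2 ^ p * α * ‖x - y₀‖ ^ p) ≤ val p δ V x ∧
      val p δ V x ≤ -(1/δ) * V x := by
  intro x
  have hlow : ∀ A ∈ actionSet p δ V x, -(1/δ) * (β + 2 ^ p * α * ‖x - y₀‖ ^ p) ≤ A := by
    rintro A ⟨γ, γ', hγ, rfl, hint, rfl⟩
    exact le_action hp hδ hα hsmall hgrowth hγ hint
  have hmem : -(1/δ) * V x ∈ actionSet p δ V x := const_mem_actionSet (by linarith) hδ V x
  exact ⟨le_csInf ⟨_, hmem⟩ hlow, csInf_le ⟨_, hlow⟩ hmem⟩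
end
end

section
/- Let $\{\gamma_k\}_{k\in\mathbb{N}}$ be a sequence of locally absolutely continuous paths $\gamma_k : [0,\infty) \to \mathbb{R}^d$ satisfying $\sup_k |\gamma_k(0)| < \infty$ and $\sup_k \int_0^\infty e^{-\delta t}|\dot\gamma_k(t)|^p dt < \infty$, where $p \in (1,\infty)$ and $\delta > 0$. Then there is a subsequence $\gamma_{k_j}$ and a path $\gamma \in AC_{p,\delta}(\mathbb{R}^d)$ such that $\gamma_{k_j} \to \gamma$ locally uniformly on $[0,\infty)$ and $\int_0^\infty |\gamma_{k_j}(t)-\gamma(t)|^r e^{-\delta t} dt \to 0$ for each $1 \le r < p$. -/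
/-!
The proof rests on two uniform estimates, and weak compactness in `L^p` is not needed.

*Modulus.* The inequality `v ≤ lam + lam ^ (1 - p) * v ^ p` bounds the total variation of a path
over a set `A ⊆ (0, T]` by `lam * |A| + lam ^ (1 - p) * exp (δ * T) * C` (`sum_dist_le`). As `lam`
is free, this one estimate gives equicontinuity, and through Arzelà–Ascoli on `[0, ∞)` a locally
uniformly convergent subsequence; since it survives pointwise limits, it makes the limit
absolutely continuous, so that the limit is the integral of its derivative. With
`lam = exp (δ * t / p)` it gives growth of order `t * exp (δ * t / p)`, whose `r`-th power is
integrable against `exp (-δ * t)` when `r < p`: weighted `L^r` convergence is dominated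
convergence (`tendsto_lintegral_rpow`).

*Energy.* By Hölder and Tonelli, difference quotients of step `h` have discounted energy at most
`exp (δ * h) * C` (`lintegral_slope_le`). Fatou's lemma carries this bound to the limit path, and
once more, as `h → 0`, to its derivative (`lintegral_deriv_le`).
-/

open MeasureTheory Set

noncomputable section

open Filter

/-! ### Uniform absolute continuity -/

/-- Elementary substitute for Young's inequality: either `v ≤ lam`, or `v = v ^ (1 - p) * v ^ p`
with `v ^ (1 - p) ≤ lam ^ (1 - p)`. -/
lemma le_add_rpow_mul {p lam v : ℝ} (hp : 1 < p) (hlam : 0 < lam) (hv : 0 ≤ v) :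
    v ≤ lam + lam ^ (1 - p) * v ^ p := by
  rcases le_or_gt v lam with h | h
  · have : 0 ≤ lam ^ (1 - p) * v ^ p := by positivity
    linarith
  · have hv0 : 0 < v := hlam.trans h
    have h1 : v ^ (1 - p) ≤ lam ^ (1 - p) :=
      Real.rpow_le_rpow_of_nonpos hlam h.le (by linarith)
    have h2 : v ^ (1 - p) * v ^ p = v := by
      rw [← Real.rpow_add hv0]; simp
    have h3 : v ^ (1 - p) * v ^ p ≤ lam ^ (1 - p) * v ^ p := by gcongr
    linarith

/-- An increment over `[a, b]`, in either order, is bounded by the length of the path between. -/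
lemma edist_le_lintegral {d : ℕ} {γ γ' : ℝ → EuclideanSpace ℝ (Fin d)}
    (hFTC : ∀ s t : ℝ, 0 ≤ s → s ≤ t →
      IntervalIntegrable γ' volume s t ∧ γ t - γ s = ∫ r in s..t, γ' r)
    {a b : ℝ} (ha : 0 ≤ a) (hb : 0 ≤ b) :
    edist (γ a) (γ b) ≤ ∫⁻ t in uIoc a b, ‖γ' t‖ₑ := by
  wlog hab : a ≤ b generalizing a b
  · rw [edist_comm, uIoc_comm]
    exact this hb ha (not_le.1 hab).le
  rw [edist_comm, edist_eq_enorm_sub, (hFTC a b ha hab).2, uIoc_of_le hab,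
    intervalIntegral.integral_of_le hab]
  exact enorm_integral_le_lintegral_enorm _

/-- Quantitative absolute continuity, with constants that depend on the path only through the
bound `C` on its discounted energy. Taking `lam` large makes the second term small; then the first is small for intervals of small total length. -/
lemma sum_dist_le {d : ℕ} {p δ C : ℝ} (hp : 1 < p) (hδ : 0 < δ) (hC : 0 ≤ C)
    {γ γ' : ℝ → EuclideanSpace ℝ (Fin d)}
    (hFTC : ∀ s t : ℝ, 0 ≤ s → s ≤ t →
      IntervalIntegrable γ' volume s t ∧ γ t - γ s = ∫ r in s..t, γ' r)
    (henergy : ∫⁻ t in Set.Ioi (0:ℝ), ENNReal.ofReal (Real.exp (-δ * t) * ‖γ' t‖ ^ p)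
        ≤ ENNReal.ofReal C)
    {T lam : ℝ} (hT : 0 ≤ T) (hlam : 0 < lam) {E : ℕ × (ℕ → ℝ × ℝ)}
    (hE : E ∈ AbsolutelyContinuousOnInterval.disjWithin 0 T) :
    ∑ i ∈ Finset.range E.1, dist (γ (E.2 i).1) (γ (E.2 i).2) ≤
      lam * ∑ i ∈ Finset.range E.1, dist (E.2 i).1 (E.2 i).2
        + lam ^ (1 - p) * Real.exp (δ * T) * C := by
  set A : Set ℝ := ⋃ i ∈ Finset.range E.1, uIoc (E.2 i).1 (E.2 i).2 with hA
  have hAT : A ⊆ Ioc 0 T := by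
    have := AbsolutelyContinuousOnInterval.biUnion_uIoc_subset_of_mem_disjWithin
      (n := E.1) (I := E.2) hE
    rwa [uIoc_of_le hT] at this
  have hAm : MeasurableSet A :=
    Finset.measurableSet_biUnion _ fun i _ => measurableSet_uIoc
  have hpos : ∀ i ∈ Finset.range E.1, 0 ≤ (E.2 i).1 ∧ 0 ≤ (E.2 i).2 := by
    intro i hi
    have := hE.1 i hi
    rw [uIcc_of_le hT] at this
    exact ⟨this.1.1, this.2.1⟩
  set c : ℝ := lam ^ (1 - p) * Real.exp (δ * T) with hc
  have hc0 : 0 ≤ c := by positivity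
  have hS0 : 0 ≤ ∑ i ∈ Finset.range E.1, dist (E.2 i).1 (E.2 i).2 :=
    Finset.sum_nonneg fun _ _ => dist_nonneg
  have hpt : ∀ t ∈ A, ‖γ' t‖ₑ ≤ ENNReal.ofReal lam +
      ENNReal.ofReal c * ENNReal.ofReal (Real.exp (-δ * t) * ‖γ' t‖ ^ p) := by
    intro t ht
    rw [← ofReal_norm, ← ENNReal.ofReal_mul hc0,
      ← ENNReal.ofReal_add hlam.le (by positivity)]
    apply ENNReal.ofReal_le_ofReal
    refine (le_add_rpow_mul hp hlam (norm_nonneg _)).trans ?_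
    have h1 : 1 ≤ Real.exp (δ * T) * Real.exp (-δ * t) := by
      rw [← Real.exp_add]
      apply Real.one_le_exp
      nlinarith [(hAT ht).2]
    have h2 : 0 ≤ lam ^ (1 - p) * ‖γ' t‖ ^ p := by positivity
    rw [hc]
    nlinarith
  have hvol : volume A ≤
      ENNReal.ofReal (∑ i ∈ Finset.range E.1, dist (E.2 i).1 (E.2 i).2) := by
    refine (measure_biUnion_finset_le _ _).trans ?_
    rw [ENNReal.ofReal_sum_of_nonneg fun _ _ => dist_nonneg]
    refine Finset.sum_le_sum fun i _ => ?_
    rw [Real.volume_uIoc, dist_comm, Real.dist_eq]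
  rw [← ENNReal.ofReal_le_ofReal_iff (by positivity),
    ENNReal.ofReal_sum_of_nonneg fun _ _ => dist_nonneg]
  calc ∑ i ∈ Finset.range E.1, ENNReal.ofReal (dist (γ (E.2 i).1) (γ (E.2 i).2))
      ≤ ∑ i ∈ Finset.range E.1, ∫⁻ t in uIoc (E.2 i).1 (E.2 i).2, ‖γ' t‖ₑ := by
        refine Finset.sum_le_sum fun i hi => ?_
        rw [← edist_dist]
        exact edist_le_lintegral hFTC (hpos i hi).1 (hpos i hi).2
    _ = ∫⁻ t in A, ‖γ' t‖ₑ :=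
        (lintegral_biUnion_finset hE.2 (fun _ _ => measurableSet_uIoc) _).symm
    _ ≤ ∫⁻ t in A, (ENNReal.ofReal lam +
          ENNReal.ofReal c * ENNReal.ofReal (Real.exp (-δ * t) * ‖γ' t‖ ^ p)) :=
        setLIntegral_mono' hAm hpt
    _ = ENNReal.ofReal lam * volume A + ENNReal.ofReal c *
          ∫⁻ t in A, ENNReal.ofReal (Real.exp (-δ * t) * ‖γ' t‖ ^ p) := by
        rw [lintegral_add_left measurable_const, setLIntegral_const,
          lintegral_const_mul' _ _ ENNReal.ofReal_ne_top]
    _ ≤ ENNReal.ofReal lam *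
          ENNReal.ofReal (∑ i ∈ Finset.range E.1, dist (E.2 i).1 (E.2 i).2)
          + ENNReal.ofReal c * ENNReal.ofReal C := by
        gcongr
        refine le_trans (lintegral_mono_set ?_) henergy
        exact hAT.trans Ioc_subset_Ioi_self
    _ = _ := by
        rw [← ENNReal.ofReal_mul hlam.le, ← ENNReal.ofReal_mul hc0,
          ENNReal.ofReal_add (by positivity) (by positivity)]

/-- The case of a single interval: a modulus of continuity shared by the whole sequence. -/
lemma dist_le_modulus {d : ℕ} {p δ C : ℝ} (hp : 1 < p) (hδ : 0 < δ) (hC : 0 ≤ C)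
    {γ γ' : ℝ → EuclideanSpace ℝ (Fin d)}
    (hFTC : ∀ s t : ℝ, 0 ≤ s → s ≤ t →
      IntervalIntegrable γ' volume s t ∧ γ t - γ s = ∫ r in s..t, γ' r)
    (henergy : ∫⁻ t in Set.Ioi (0:ℝ), ENNReal.ofReal (Real.exp (-δ * t) * ‖γ' t‖ ^ p)
        ≤ ENNReal.ofReal C)
    {T lam s t : ℝ} (hlam : 0 < lam) (hs : s ∈ Icc 0 T) (ht : t ∈ Icc 0 T) :
    dist (γ s) (γ t) ≤ lam * dist s t + lam ^ (1 - p) * Real.exp (δ * T) * C := by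
  have hT : 0 ≤ T := hs.1.trans hs.2
  have := sum_dist_le hp hδ hC hFTC henergy hT hlam (E := (1, fun _ => (s, t)))
    ⟨fun i _ => by simpa [uIcc_of_le hT] using ⟨hs, ht⟩, by
      simp [Set.PairwiseDisjoint, Set.Pairwise]⟩
  simpa using this

/-! ### Energy of difference quotients -/

/-- Swapping the integrals, each `s > 0` is counted over a set of `t` of measure at most `h`. -/
lemma lintegral_window_le {F : ℝ → ENNReal} (hF : AEMeasurable F (volume.restrict (Ioi 0)))
    (h : ℝ) :
    ∫⁻ t in Ioi (0:ℝ), ∫⁻ s in Ioc t (t + h), F s ≤ ENNReal.ofReal h * ∫⁻ s in Ioi (0:ℝ), F s := by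
  -- A measurable representative of `F` on `(0, ∞)`, extended by zero.
  set G : ℝ → ENNReal := (Ioi (0:ℝ)).indicator (hF.mk F) with hG
  have hGm : Measurable G := hF.measurable_mk.indicator measurableSet_Ioi
  have hGF : ∀ᵐ s, s ∈ Ioi (0:ℝ) → F s = G s := by
    filter_upwards [(ae_restrict_iff' measurableSet_Ioi).1 hF.ae_eq_mk] with s hs hs0
    rw [hs hs0, hG, indicator_of_mem hs0]
  have hS : MeasurableSet {q : ℝ × ℝ | q.1 < q.2 ∧ q.2 ≤ q.1 + h} :=
    (measurableSet_lt measurable_fst measurable_snd).inter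
      (measurableSet_le measurable_snd (measurable_fst.add_const h))
  have hm : Measurable (fun q : ℝ × ℝ =>
      {q : ℝ × ℝ | q.1 < q.2 ∧ q.2 ≤ q.1 + h}.indicator (fun q => G q.2) q) :=
    (hGm.comp measurable_snd).indicator hS
  calc ∫⁻ t in Ioi (0:ℝ), ∫⁻ s in Ioc t (t + h), F s
      = ∫⁻ t in Ioi (0:ℝ), ∫⁻ s,
          {q : ℝ × ℝ | q.1 < q.2 ∧ q.2 ≤ q.1 + h}.indicator (fun q => G q.2) (t, s) := by
        refine setLIntegral_congr_fun measurableSet_Ioi fun t ht => ?_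
        rw [← lintegral_indicator measurableSet_Ioc]
        refine lintegral_congr_ae ?_
        filter_upwards [hGF] with s hs
        by_cases hst : s ∈ Ioc t (t + h)
        · rw [indicator_of_mem hst, indicator_of_mem (by exact hst)]
          exact hs (lt_trans ht hst.1)
        · rw [indicator_of_notMem hst, indicator_of_notMem (by exact hst)]
    _ ≤ ∫⁻ t, ∫⁻ s,
          {q : ℝ × ℝ | q.1 < q.2 ∧ q.2 ≤ q.1 + h}.indicator (fun q => G q.2) (t, s) :=
        setLIntegral_le_lintegral _ _
    _ = ∫⁻ s, ∫⁻ t,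
          {q : ℝ × ℝ | q.1 < q.2 ∧ q.2 ≤ q.1 + h}.indicator (fun q => G q.2) (t, s) :=
        lintegral_lintegral_swap hm.aemeasurable
    _ = ∫⁻ s, ENNReal.ofReal h * G s := by
        refine lintegral_congr fun s => ?_
        have : ∀ t, {q : ℝ × ℝ | q.1 < q.2 ∧ q.2 ≤ q.1 + h}.indicator (fun q => G q.2) (t, s)
            = (Ico (s - h) s).indicator (fun _ => G s) t := by
          intro t
          by_cases hts : t ∈ Ico (s - h) s
          · rw [indicator_of_mem hts, indicator_of_mem]
            exact ⟨hts.2, by linarith [hts.1]⟩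
          · rw [indicator_of_notMem hts, indicator_of_notMem]
            rintro ⟨h1, h2⟩
            exact hts ⟨by simp only at h2; linarith, h1⟩
        simp_rw [this]
        rw [lintegral_indicator measurableSet_Ico, setLIntegral_const, Real.volume_Ico, mul_comm]
        simp
    _ = ENNReal.ofReal h * ∫⁻ s, G s := lintegral_const_mul _ hGm
    _ = ENNReal.ofReal h * ∫⁻ s in Ioi (0:ℝ), F s := by
        congr 1
        rw [hG, lintegral_indicator measurableSet_Ioi]
        exact lintegral_congr_ae hF.ae_eq_mk.symm

lemma aestronglyMeasurable_of_ftc {d : ℕ} {γ γ' : ℝ → EuclideanSpace ℝ (Fin d)}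
    (hFTC : ∀ s t : ℝ, 0 ≤ s → s ≤ t →
      IntervalIntegrable γ' volume s t ∧ γ t - γ s = ∫ r in s..t, γ' r) :
    AEStronglyMeasurable γ' (volume.restrict (Ioi 0)) := by
  have hU : (Ioi (0:ℝ)) = ⋃ n : ℕ, Ioc (0:ℝ) n := by
    ext x
    simp only [mem_Ioi, mem_iUnion, mem_Ioc]
    exact ⟨fun hx => (exists_nat_ge x).imp fun n hn => ⟨hx, hn⟩, fun ⟨_, hx⟩ => hx.1⟩
  rw [hU, aestronglyMeasurable_iUnion_iff]
  exact fun n => (((hFTC 0 n le_rfl n.cast_nonneg).1).1).aestronglyMeasurable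

/-- Difference quotients cost at most a factor `exp (δ * h)` in discounted energy: Hölder on each
window `(t, t + h]`, followed by `lintegral_window_le`. -/
lemma lintegral_slope_le {d : ℕ} {p δ C : ℝ} (hp : 1 < p) (hδ : 0 < δ)
    {γ γ' : ℝ → EuclideanSpace ℝ (Fin d)}
    (hFTC : ∀ s t : ℝ, 0 ≤ s → s ≤ t →
      IntervalIntegrable γ' volume s t ∧ γ t - γ s = ∫ r in s..t, γ' r)
    (henergy : ∫⁻ t in Set.Ioi (0:ℝ), ENNReal.ofReal (Real.exp (-δ * t) * ‖γ' t‖ ^ p)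
        ≤ ENNReal.ofReal C) {h : ℝ} (hh : 0 < h) :
    ∫⁻ t in Ioi (0:ℝ), ENNReal.ofReal (Real.exp (-δ * t) * ‖h⁻¹ • (γ (t + h) - γ t)‖ ^ p)
      ≤ ENNReal.ofReal (Real.exp (δ * h)) * ENNReal.ofReal C := by
  have hp0 : 0 < p := by linarith
  have hmeas := aestronglyMeasurable_of_ftc hFTC
  set F : ℝ → ENNReal := fun t => ENNReal.ofReal (Real.exp (-δ * t) * ‖γ' t‖ ^ p) with hFdef
  have hF : AEMeasurable F (volume.restrict (Ioi 0)) := by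
    have h1 : Measurable fun t : ℝ => Real.exp (-δ * t) := by fun_prop
    exact (h1.aemeasurable.mul (hmeas.norm.aemeasurable.pow_const p)).ennreal_ofReal
  have hpt : ∀ t ∈ Ioi (0:ℝ),
      ENNReal.ofReal (Real.exp (-δ * t) * ‖h⁻¹ • (γ (t + h) - γ t)‖ ^ p) ≤
        ENNReal.ofReal (h⁻¹ * Real.exp (δ * h)) * ∫⁻ s in Ioc t (t + h), F s := by
    intro t ht
    have ht0 : (0:ℝ) < t := ht
    set μ : Measure ℝ := volume.restrict (Ioc t (t + h)) with hμ
    set q := p.conjExponent with hq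
    have hpq : p.HolderConjugate q := Real.HolderConjugate.conjExponent hp
    have hm : AEMeasurable (fun s => ‖γ' s‖ₑ) μ :=
      (hmeas.mono_measure (Measure.restrict_mono
        (fun s hs => lt_trans ht0 hs.1) le_rfl)).enorm
    have hHol := ENNReal.lintegral_mul_le_Lp_mul_Lq μ hpq hm
      (aemeasurable_const (b := (1 : ENNReal)))
    have hinc : ‖γ (t + h) - γ t‖ₑ ≤ ∫⁻ s, ‖γ' s‖ₑ ∂μ := by
      have := edist_le_lintegral hFTC (a := t) (b := t + h) ht0.le (by linarith)
      rwa [edist_comm, edist_eq_enorm_sub, uIoc_of_le (by linarith)] at this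
    have hvol : μ univ = ENNReal.ofReal h := by simp [hμ]
    have hJ : ‖γ (t + h) - γ t‖ₑ ^ p ≤
        ENNReal.ofReal (h ^ (p - 1)) * ∫⁻ s, ‖γ' s‖ₑ ^ p ∂μ := by
      have h1 : ‖γ (t + h) - γ t‖ₑ ≤
          (∫⁻ s, ‖γ' s‖ₑ ^ p ∂μ) ^ (1 / p) * (ENNReal.ofReal h) ^ (1 / q) := by
        refine hinc.trans ?_
        simpa [Pi.mul_def, hvol] using hHol
      refine (ENNReal.rpow_le_rpow h1 hp0.le).trans_eq ?_
      rw [ENNReal.mul_rpow_of_nonneg _ _ hp0.le, ← ENNReal.rpow_mul, ← ENNReal.rpow_mul,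
        one_div_mul_cancel hp0.ne', ENNReal.rpow_one, mul_comm]
      congr 1
      rw [ENNReal.ofReal_rpow_of_pos hh]
      congr 2
      rw [← hpq.div_conj_eq_sub_one]; ring
    have hFs : ∫⁻ s, ‖γ' s‖ₑ ^ p ∂μ ≤
        ENNReal.ofReal (Real.exp (δ * (t + h))) * ∫⁻ s, F s ∂μ := by
      rw [← lintegral_const_mul' _ _ ENNReal.ofReal_ne_top]
      refine setLIntegral_mono' measurableSet_Ioc fun s hs => ?_
      rw [← ofReal_norm, ENNReal.ofReal_rpow_of_nonneg (norm_nonneg _) hp0.le,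
        hFdef, ← ENNReal.ofReal_mul (Real.exp_pos _).le, ← mul_assoc]
      apply ENNReal.ofReal_le_ofReal
      refine le_mul_of_one_le_left (by positivity) ?_
      rw [← Real.exp_add]
      apply Real.one_le_exp
      nlinarith [hs.2]
    calc ENNReal.ofReal (Real.exp (-δ * t) * ‖h⁻¹ • (γ (t + h) - γ t)‖ ^ p)
        = ENNReal.ofReal (Real.exp (-δ * t) * h⁻¹ ^ p) * ‖γ (t + h) - γ t‖ₑ ^ p := by
          rw [← ofReal_norm, ENNReal.ofReal_rpow_of_nonneg (norm_nonneg _) hp0.le,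
            ← ENNReal.ofReal_mul (by positivity), norm_smul,
            Real.mul_rpow (norm_nonneg _) (norm_nonneg _), Real.norm_of_nonneg (by positivity),
            mul_assoc]
      _ ≤ ENNReal.ofReal (Real.exp (-δ * t) * h⁻¹ ^ p) * (ENNReal.ofReal (h ^ (p - 1)) *
            (ENNReal.ofReal (Real.exp (δ * (t + h))) * ∫⁻ s, F s ∂μ)) := by
          gcongr
          exact hJ.trans (by gcongr)
      _ = _ := by
          rw [← mul_assoc, ← mul_assoc, ← ENNReal.ofReal_mul (by positivity),
            ← ENNReal.ofReal_mul (by positivity)]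
          congr 2
          have e1 : h⁻¹ ^ p * h ^ (p - 1) = h⁻¹ := by
            rw [Real.inv_rpow hh.le, ← Real.rpow_neg hh.le, ← Real.rpow_add hh,
              ← Real.rpow_neg_one]
            congr 1; ring
          have e2 : Real.exp (-δ * t) * Real.exp (δ * (t + h)) = Real.exp (δ * h) := by
            rw [← Real.exp_add]; congr 1; ring
          linear_combination
            (Real.exp (-δ * t) * Real.exp (δ * (t + h))) * e1 + h⁻¹ * e2
  calc _ ≤ ∫⁻ t in Ioi (0:ℝ),
        ENNReal.ofReal (h⁻¹ * Real.exp (δ * h)) * ∫⁻ s in Ioc t (t + h), F s :=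
        setLIntegral_mono' measurableSet_Ioi hpt
    _ = ENNReal.ofReal (h⁻¹ * Real.exp (δ * h)) *
        ∫⁻ t in Ioi (0:ℝ), ∫⁻ s in Ioc t (t + h), F s :=
        lintegral_const_mul' _ _ ENNReal.ofReal_ne_top
    _ ≤ ENNReal.ofReal (h⁻¹ * Real.exp (δ * h)) * (ENNReal.ofReal h * ENNReal.ofReal C) := by
        gcongr
        exact (lintegral_window_le hF h).trans (by gcongr)
    _ = _ := by
        rw [← mul_assoc, ← ENNReal.ofReal_mul (by positivity)]
        congr 2
        field_simp

/-! ### Equicontinuity and extraction of a subsequence -/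

lemma exists_rpow_mul_lt {p : ℝ} (hp : 1 < p) (K : ℝ) {ε : ℝ} (hε : 0 < ε) :
    ∃ lam : ℝ, 0 < lam ∧ lam ^ (1 - p) * K < ε := by
  have h1 : Tendsto (fun x : ℝ => x ^ (1 - p) * K) atTop (nhds (0 * K)) := by
    have := tendsto_rpow_neg_atTop (y := p - 1) (by linarith)
    rw [neg_sub] at this
    exact this.mul_const K
  rw [zero_mul] at h1
  obtain ⟨lam, hl⟩ := ((h1.eventually (gt_mem_nhds hε)).and (eventually_gt_atTop 0)).exists
  exact ⟨lam, hl.2, hl.1⟩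

/-- The modulus of continuity on `[0, ∞)` provided by `dist_le_modulus`; the parameter `lam` is
free. -/
def HasModulus {d : ℕ} (p δ C : ℝ) (g : ℝ → EuclideanSpace ℝ (Fin d)) : Prop :=
  ∀ T lam s t : ℝ, 0 < lam → s ∈ Icc 0 T → t ∈ Icc 0 T →
    dist (g s) (g t) ≤ lam * dist s t + lam ^ (1 - p) * Real.exp (δ * T) * C

lemma equicontinuous_of_hasModulus {d : ℕ} {p δ C : ℝ} (hp : 1 < p) {ι : Type*}
    (F : ι → NNReal → EuclideanSpace ℝ (Fin d))
    (hF : ∀ i, HasModulus p δ C (fun t => F i t.toNNReal)) : Equicontinuous F := by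
  intro x₀
  rw [Metric.equicontinuousAt_iff]
  intro ε hε
  obtain ⟨lam, hl, hlε⟩ :=
    exists_rpow_mul_lt hp (Real.exp (δ * ((x₀ : ℝ) + 1)) * C) (half_pos hε)
  refine ⟨min 1 (ε / 2 / lam), by positivity, fun x hx i => ?_⟩
  have hx1 : dist x x₀ < 1 := hx.trans_le (min_le_left _ _)
  have hx2 : dist x x₀ < ε / 2 / lam := hx.trans_le (min_le_right _ _)
  have hxT : (x : ℝ) ≤ x₀ + 1 := by
    rw [NNReal.dist_eq] at hx1
    linarith [(abs_lt.1 hx1).2]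
  have := hF i (x₀ + 1) lam x₀ x hl ⟨x₀.2, by linarith⟩ ⟨x.2, hxT⟩
  simp only [Real.toNNReal_coe] at this
  refine this.trans_lt ?_
  rw [lt_div_iff₀ hl] at hx2
  have e : dist (x₀ : ℝ) (x : ℝ) = dist x x₀ := dist_comm x₀ x
  rw [e]
  linarith

lemma HasModulus.toNNReal {d : ℕ} {p δ C : ℝ} {g : ℝ → EuclideanSpace ℝ (Fin d)}
    (hg : HasModulus p δ C g) : HasModulus p δ C (fun t => g (t.toNNReal : ℝ)) := by
  intro T lam s t hl hs ht
  simp only [Real.coe_toNNReal _ hs.1, Real.coe_toNNReal _ ht.1]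
  exact hg T lam s t hl hs ht

lemma HasModulus.continuous_coe {d : ℕ} {p δ C : ℝ} (hp : 1 < p)
    {g : ℝ → EuclideanSpace ℝ (Fin d)} (hg : HasModulus p δ C g) :
    Continuous fun t : NNReal => g t :=
  (equicontinuous_of_hasModulus hp (fun (_ : Unit) (t : NNReal) => g t)
    fun _ => hg.toNNReal).continuous ()

lemma HasModulus.continuousOn {d : ℕ} {p δ C : ℝ} (hp : 1 < p)
    {g : ℝ → EuclideanSpace ℝ (Fin d)} (hg : HasModulus p δ C g) : ContinuousOn g (Ici 0) := by
  refine ((hg.continuous_coe hp).comp continuous_real_toNNReal).continuousOn.congr ?_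
  intro t ht
  simp [Real.coe_toNNReal _ (mem_Ici.1 ht)]

/-- The choice `lam = exp (δ * t / p)` balances both terms of the modulus, so paths grow like
`exp (δ * t / p)` up to a linear factor. -/
lemma HasModulus.norm_le {d : ℕ} {p δ C : ℝ} (hp : 1 < p)
    {g : ℝ → EuclideanSpace ℝ (Fin d)} (hg : HasModulus p δ C g) (h0 : ‖g 0‖ ≤ C)
    {t : ℝ} (ht : 0 ≤ t) : ‖g t‖ ≤ C + Real.exp (δ * t / p) * (t + C) := by
  have h := hg t (Real.exp (δ * t / p)) 0 t (Real.exp_pos _) ⟨le_rfl, ht⟩ ⟨ht, le_rfl⟩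
  have e : Real.exp (δ * t / p) ^ (1 - p) * Real.exp (δ * t) = Real.exp (δ * t / p) := by
    rw [← Real.exp_mul, ← Real.exp_add]
    congr 1
    field_simp
    ring
  rw [e, dist_zero_left, Real.norm_of_nonneg ht, dist_comm, dist_eq_norm] at h
  have : ‖g t‖ ≤ ‖g 0‖ + ‖g t - g 0‖ := by
    have := norm_add_le (g 0) (g t - g 0)
    rwa [add_sub_cancel] at this
  linarith

/-- Arzelà–Ascoli in `C([0, ∞), ℝ^d)`. The functions with the given modulus and initial bound form
a set that is closed under pointwise limits and lies in a product of balls, hence is compact for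
the topology of locally uniform convergence, which is metrizable. -/
lemma exists_subseq_tendstoUniformlyOn {d : ℕ} {p δ C : ℝ} (hp : 1 < p)
    {γ : ℕ → ℝ → EuclideanSpace ℝ (Fin d)} (hγ : ∀ k, HasModulus p δ C (γ k))
    (h0 : ∀ k, ‖γ k 0‖ ≤ C) :
    ∃ (φ : ℕ → ℕ) (g : ℝ → EuclideanSpace ℝ (Fin d)), StrictMono φ ∧ Continuous g ∧
      ∀ K : Set ℝ, K ⊆ Set.Ici 0 → IsCompact K →
        TendstoUniformlyOn (fun j t => γ (φ j) t) g atTop K := by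
  set P : Set (NNReal → EuclideanSpace ℝ (Fin d)) :=
    {f | ‖f 0‖ ≤ C ∧ HasModulus p δ C (fun t => f t.toNNReal)} with hP
  have hPcont : ∀ f ∈ P, Continuous f := fun f hf =>
    (equicontinuous_of_hasModulus hp (fun (_ : Unit) => f) fun _ => hf.2).continuous ()
  have hPclosed : IsClosed P := by
    have e : P = {f | ‖f 0‖ ≤ C} ∩ ⋂ (T : ℝ) (lam : ℝ) (s : ℝ) (t : ℝ) (_ : 0 < lam)
        (_ : s ∈ Icc 0 T) (_ : t ∈ Icc 0 T), {f : NNReal → EuclideanSpace ℝ (Fin d) |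
          dist (f s.toNNReal) (f t.toNNReal) ≤
            lam * dist s t + lam ^ (1 - p) * Real.exp (δ * T) * C} := by
      ext f
      simp only [hP, HasModulus, mem_inter_iff, mem_iInter, mem_ofPred_eq]
    rw [e]
    refine (isClosed_le (by fun_prop) continuous_const).inter ?_
    refine isClosed_iInter fun T => isClosed_iInter fun lam => isClosed_iInter fun s =>
      isClosed_iInter fun t => isClosed_iInter fun _ => isClosed_iInter fun _ =>
      isClosed_iInter fun _ => isClosed_le (by fun_prop) continuous_const
  have hPcompact : IsCompact P := by
    refine (isCompact_univ_pi (fun t : NNReal => isCompact_closedBall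
      (0 : EuclideanSpace ℝ (Fin d))
      (C + Real.exp (δ * t / p) * (t + C)))).of_isClosed_subset hPclosed ?_
    intro f hf t _
    rw [mem_closedBall_zero_iff]
    simpa using hf.2.norm_le hp (by simpa using hf.1) t.2
  set S : Set C(NNReal, EuclideanSpace ℝ (Fin d)) := {f | (f : NNReal → _) ∈ P} with hS
  have hSimage : ContinuousMap.toFun '' S = P := by
    ext f
    constructor
    · rintro ⟨f, hf, rfl⟩; exact hf
    · exact fun hf => ⟨⟨f, hPcont f hf⟩, hf, rfl⟩
  have hScompact : IsCompact S :=
    ArzelaAscoli.isCompact_of_equicontinuous S (by rwa [hSimage])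
      (equicontinuous_of_hasModulus hp _ fun f => f.2.2)
  set c : ℕ → C(NNReal, EuclideanSpace ℝ (Fin d)) := fun k =>
    ⟨fun t => γ k t, (hγ k).continuous_coe hp⟩ with hc
  have hcS : ∀ k, c k ∈ S := fun k => ⟨by simpa [hc] using h0 k, (hγ k).toNNReal⟩
  obtain ⟨f, -, φ, hφ, hlim⟩ := hScompact.tendsto_subseq hcS
  refine ⟨φ, fun t => f t.toNNReal, hφ, f.continuous.comp continuous_real_toNNReal, ?_⟩
  intro K hK hKc
  have h := ContinuousMap.tendsto_iff_forall_isCompact_tendstoUniformlyOn.1 hlim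
    (Real.toNNReal '' K) (hKc.image continuous_real_toNNReal)
  rw [Metric.tendstoUniformlyOn_iff] at h ⊢
  intro ε hε
  filter_upwards [h ε hε] with j hj t ht
  have := hj t.toNNReal (mem_image_of_mem _ ht)
  simpa [hc, Real.coe_toNNReal _ (mem_Ici.1 (hK ht))] using this

/-! ### Absolute continuity and energy of the limit -/

/-- The fundamental theorem of calculus for absolutely continuous curves, coordinate by
coordinate. -/
lemma ftc_of_absolutelyContinuous {d : ℕ} {g : ℝ → EuclideanSpace ℝ (Fin d)}
    (hg : ∀ T : ℝ, 0 ≤ T → AbsolutelyContinuousOnInterval g 0 T) :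
    ∃ g' : ℝ → EuclideanSpace ℝ (Fin d), Measurable g' ∧
      (∀ s t : ℝ, 0 ≤ s → s ≤ t →
        IntervalIntegrable g' volume s t ∧ g t - g s = ∫ r in s..t, g' r) ∧
      ∀ᵐ t, t ∈ Ioi (0:ℝ) → HasDerivAt g (g' t) t := by
  set D : Fin d → ℝ → ℝ := fun i => deriv (fun s => g s i) with hD
  set g' : ℝ → EuclideanSpace ℝ (Fin d) := fun t => WithLp.toLp 2 (fun i => D i t) with hg'
  have hgi : ∀ i, ∀ T : ℝ, 0 ≤ T → AbsolutelyContinuousOnInterval (fun s => g s i) 0 T := by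
    intro i T hT
    refine squeeze_zero (fun E => Finset.sum_nonneg fun _ _ => dist_nonneg) (fun E => ?_) (hg T hT)
    refine Finset.sum_le_sum fun j _ => ?_
    rw [dist_eq_norm, dist_eq_norm]
    exact PiLp.norm_apply_le (g (E.2 j).1 - g (E.2 j).2) i
  have hmeas : Measurable g' := by
    refine (WithLp.measurable_toLp 2 (Fin d → ℝ)).comp ?_
    exact measurable_pi_lambda _ fun i => measurable_deriv _
  refine ⟨g', hmeas, fun s t hs hst => ?_, ?_⟩
  · have hAC : ∀ i, AbsolutelyContinuousOnInterval (fun s => g s i) s t := fun i =>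
      (hgi i t (hs.trans hst)).mono (by
        rw [uIcc_of_le hst, uIcc_of_le (hs.trans hst)]; exact Icc_subset_Icc_left hs)
    have hint : IntervalIntegrable g' volume s t := by
      rw [intervalIntegrable_iff]
      have h2 : Integrable (fun t => fun i => D i t) (volume.restrict (uIoc s t)) := by
        refine Integrable.of_eval fun i => ?_
        exact intervalIntegrable_iff.1 (hAC i).intervalIntegrable_deriv
      exact (PiLp.continuousLinearEquiv 2 ℝ
        (fun _ : Fin d => ℝ)).symm.toContinuousLinearMap.integrable_comp h2
    refine ⟨hint, ?_⟩
    ext i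
    have h1 := (EuclideanSpace.proj i :
      EuclideanSpace ℝ (Fin d) →L[ℝ] ℝ).intervalIntegral_comp_comm hint
    have h2 := (hAC i).integral_deriv_eq_sub
    simp only [PiLp.proj_apply] at h1
    rw [← h1]
    exact h2.symm
  · have hae : ∀ (n : ℕ) (i : Fin d), ∀ᵐ t : ℝ, t ∈ uIcc (0:ℝ) n →
        DifferentiableAt ℝ (fun s => g s i) t :=
      fun n i => (hgi i n n.cast_nonneg).ae_differentiableAt
    filter_upwards [ae_all_iff.2 fun n => ae_all_iff.2 (hae n)] with t ht ht0
    obtain ⟨n, hn⟩ := exists_nat_ge t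
    have hpi : HasDerivAt (fun s => fun i => g s i) (fun i => D i t) t :=
      hasDerivAt_pi.2 fun i =>
        (ht n i (by rw [uIcc_of_le n.cast_nonneg]; exact ⟨(mem_Ioi.1 ht0).le, hn⟩)).hasDerivAt
    exact (PiLp.continuousLinearEquiv 2 ℝ
      (fun _ : Fin d => ℝ)).symm.toContinuousLinearMap.hasFDerivAt.comp_hasDerivAt t hpi

lemma absolutelyContinuous_of_tendsto {d : ℕ} {p δ C : ℝ} (hp : 1 < p) (hδ : 0 < δ) (hC : 0 ≤ C)
    {γ γ' : ℕ → ℝ → EuclideanSpace ℝ (Fin d)}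
    (hFTC : ∀ k, ∀ s t : ℝ, 0 ≤ s → s ≤ t →
      IntervalIntegrable (γ' k) volume s t ∧ γ k t - γ k s = ∫ r in s..t, γ' k r)
    (henergy : ∀ k,
      ∫⁻ t in Set.Ioi (0:ℝ), ENNReal.ofReal (Real.exp (-δ * t) * ‖γ' k t‖ ^ p)
        ≤ ENNReal.ofReal C)
    {g : ℝ → EuclideanSpace ℝ (Fin d)}
    (hlim : ∀ t : ℝ, 0 ≤ t → Tendsto (fun k => γ k t) atTop (nhds (g t)))
    {T : ℝ} (hT : 0 ≤ T) : AbsolutelyContinuousOnInterval g 0 T := by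
  rw [absolutelyContinuousOnInterval_iff]
  intro ε hε
  obtain ⟨lam, hl, hlε⟩ := exists_rpow_mul_lt hp (Real.exp (δ * T) * C) (half_pos hε)
  refine ⟨ε / 2 / lam, by positivity, fun E hE hsum => ?_⟩
  have hpos : ∀ i ∈ Finset.range E.1, 0 ≤ (E.2 i).1 ∧ 0 ≤ (E.2 i).2 := by
    intro i hi
    have := hE.1 i hi
    rw [uIcc_of_le hT] at this
    exact ⟨this.1.1, this.2.1⟩
  have h1 : Tendsto (fun k => ∑ i ∈ Finset.range E.1, dist (γ k (E.2 i).1) (γ k (E.2 i).2)) atTop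
      (nhds (∑ i ∈ Finset.range E.1, dist (g (E.2 i).1) (g (E.2 i).2))) :=
    tendsto_finsetSum _ fun i hi => (hlim _ (hpos i hi).1).dist (hlim _ (hpos i hi).2)
  have h2 := le_of_tendsto h1
    (Eventually.of_forall fun k => sum_dist_le hp hδ hC (hFTC k) (henergy k) hT hl hE)
  rw [lt_div_iff₀ hl] at hsum
  linarith

lemma lintegral_le_of_ae_tendsto {α : Type*} [MeasurableSpace α] {μ : Measure α}
    {f : ℕ → α → ENNReal} {F : α → ENNReal} {B : ENNReal} (hm : ∀ n, AEMeasurable (f n) μ)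
    (hlim : ∀ᵐ a ∂μ, Tendsto (fun n => f n a) atTop (nhds (F a)))
    (hB : ∀ n, ∫⁻ a, f n a ∂μ ≤ B) : ∫⁻ a, F a ∂μ ≤ B := by
  calc ∫⁻ a, F a ∂μ = ∫⁻ a, liminf (fun n => f n a) atTop ∂μ :=
        lintegral_congr_ae (hlim.mono fun a ha => ha.liminf_eq.symm)
    _ ≤ liminf (fun n => ∫⁻ a, f n a ∂μ) atTop := lintegral_liminf_le' hm
    _ ≤ B := liminf_le_of_frequently_le' (Frequently.of_forall hB)

/-- Lower semicontinuity of the energy, up to the factor `exp δ`, by two applications of Fatou's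
lemma: to the difference quotients of a fixed step along the sequence, and then to those of the
limit as the step tends to `0`. -/
lemma lintegral_deriv_le {d : ℕ} {p δ C : ℝ} (hp : 1 < p) (hδ : 0 < δ)
    {γ γ' : ℕ → ℝ → EuclideanSpace ℝ (Fin d)}
    (hFTC : ∀ k, ∀ s t : ℝ, 0 ≤ s → s ≤ t →
      IntervalIntegrable (γ' k) volume s t ∧ γ k t - γ k s = ∫ r in s..t, γ' k r)
    (henergy : ∀ k,
      ∫⁻ t in Set.Ioi (0:ℝ), ENNReal.ofReal (Real.exp (-δ * t) * ‖γ' k t‖ ^ p)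
        ≤ ENNReal.ofReal C)
    (hcont : ∀ k, ContinuousOn (γ k) (Ici 0))
    {g g' : ℝ → EuclideanSpace ℝ (Fin d)} (hgc : Continuous g)
    (hlim : ∀ t : ℝ, 0 ≤ t → Tendsto (fun k => γ k t) atTop (nhds (g t)))
    (hderiv : ∀ᵐ t, t ∈ Ioi (0:ℝ) → HasDerivAt g (g' t) t) :
    ∫⁻ t in Set.Ioi (0:ℝ), ENNReal.ofReal (Real.exp (-δ * t) * ‖g' t‖ ^ p)
      ≤ ENNReal.ofReal (Real.exp δ) * ENNReal.ofReal C := by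
  have hp0 : 0 < p := by linarith
  have hΦ : ∀ t : ℝ, Continuous fun v : EuclideanSpace ℝ (Fin d) =>
      ENNReal.ofReal (Real.exp (-δ * t) * ‖v‖ ^ p) := fun t =>
    ENNReal.continuous_ofReal.comp
      (continuous_const.mul (continuous_norm.rpow_const fun _ => Or.inr hp0.le))
  have hstep : ∀ h : ℝ, 0 < h →
      ∫⁻ t in Ioi (0:ℝ), ENNReal.ofReal (Real.exp (-δ * t) * ‖h⁻¹ • (g (t + h) - g t)‖ ^ p)
        ≤ ENNReal.ofReal (Real.exp (δ * h)) * ENNReal.ofReal C := by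
    intro h hh
    refine lintegral_le_of_ae_tendsto (fun k => ?_) ?_
      fun k => lintegral_slope_le hp hδ (hFTC k) (henergy k) hh
    · have c0 : ContinuousOn (fun t => γ k (t + h)) (Ioi 0) :=
        (hcont k).comp (by fun_prop) fun t ht => by
          have := mem_Ioi.1 ht
          exact mem_Ici.2 (by linarith)
      have c1 : ContinuousOn (fun t => h⁻¹ • (γ k (t + h) - γ k t)) (Ioi 0) :=
        (c0.sub ((hcont k).mono Ioi_subset_Ici_self)).const_smul h⁻¹
      have c2 : ContinuousOn
          (fun t => Real.exp (-δ * t) * ‖h⁻¹ • (γ k (t + h) - γ k t)‖ ^ p) (Ioi 0) :=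
        ContinuousOn.mul (by fun_prop) (c1.norm.rpow_const fun _ _ => Or.inr hp0.le)
      exact (c2.aemeasurable measurableSet_Ioi).ennreal_ofReal
    · filter_upwards [ae_restrict_mem measurableSet_Ioi] with t ht
      have ht0 : 0 < t := ht
      have hq : Tendsto (fun k => h⁻¹ • (γ k (t + h) - γ k t)) atTop
          (nhds (h⁻¹ • (g (t + h) - g t))) :=
        ((hlim (t + h) (by linarith)).sub (hlim t ht0.le)).const_smul h⁻¹
      exact ((hΦ t).tendsto _).comp hq
  refine lintegral_le_of_ae_tendsto
    (f := fun n t => ENNReal.ofReal (Real.exp (-δ * t) *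
      ‖((1:ℝ) / ((n:ℝ) + 1))⁻¹ • (g (t + (1:ℝ) / ((n:ℝ) + 1)) - g t)‖ ^ p)) (fun n => ?_) ?_
    fun n => (hstep (1 / ((n:ℝ) + 1)) (by positivity)).trans ?_
  · refine Measurable.aemeasurable (Measurable.ennreal_ofReal ?_)
    refine Measurable.mul (by fun_prop) (Measurable.pow_const (Continuous.measurable ?_) p)
    fun_prop
  · filter_upwards [(ae_restrict_iff' measurableSet_Ioi).2 hderiv] with t ht
    refine ((hΦ t).tendsto _).comp ?_
    have hz : Tendsto (fun n : ℕ => (1:ℝ) / ((n:ℝ) + 1)) atTop (nhdsWithin 0 {0}ᶜ) := by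
      refine tendsto_nhdsWithin_iff.2
        ⟨tendsto_one_div_add_atTop_nhds_zero_nat, Eventually.of_forall fun n => ?_⟩
      have : (0:ℝ) < 1 / ((n:ℝ) + 1) := by positivity
      exact this.ne'
    exact ht.tendsto_slope_zero.comp hz
  · gcongr
    have : (1:ℝ) / ((n:ℝ) + 1) ≤ 1 := by
      rw [div_le_one (by positivity)]
      linarith [n.cast_nonneg (α := ℝ)]
    nlinarith

/-! ### Weighted `L^r` convergence -/

/-- Dominated convergence in `L^r`. By `HasModulus.norm_le` the paths are `O(t * exp (δ * t / p))`
uniformly, and `r < p` leaves room to absorb the factor `t`. -/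
lemma tendsto_lintegral_rpow {d : ℕ} {p δ C r : ℝ} (hp : 1 < p) (hδ : 0 < δ) (hC : 0 ≤ C)
    (hr1 : 1 ≤ r) (hrp : r < p) {γ : ℕ → ℝ → EuclideanSpace ℝ (Fin d)}
    (hmod : ∀ k, HasModulus p δ C (γ k)) (h0 : ∀ k, ‖γ k 0‖ ≤ C)
    {g : ℝ → EuclideanSpace ℝ (Fin d)} (hgc : Continuous g)
    (hgmod : HasModulus p δ C g) (hg0 : ‖g 0‖ ≤ C)
    (hlim : ∀ t : ℝ, 0 ≤ t → Tendsto (fun k => γ k t) atTop (nhds (g t))) :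
    Tendsto (fun j => ∫⁻ t in Set.Ioi (0:ℝ),
        ENNReal.ofReal (‖γ j t - g t‖ ^ r * Real.exp (-δ * t))) atTop (nhds 0) := by
  have hp0 : 0 < p := by linarith
  have hr0 : 0 < r := by linarith
  -- The margin `η` satisfies `r * (δ / p + η) = (δ * r / p + δ) / 2 < δ`.
  set η : ℝ := (δ / r - δ / p) / 2 with hη
  have hη0 : 0 < η := by
    have : δ / p < δ / r := div_lt_div_of_pos_left hδ hr0 hrp
    rw [hη]; linarith
  set κ : ℝ := δ - r * (δ / p + η) with hκ
  have hκ0 : 0 < κ := by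
    have e : κ = r * η := by rw [hκ, hη]; field_simp; ring
    rw [e]; positivity
  set M : ℝ := 2 * (1 / η + 2 * C) with hM
  have hM0 : 0 ≤ M := by positivity
  have hgrow : ∀ f : ℝ → EuclideanSpace ℝ (Fin d), HasModulus p δ C f → ‖f 0‖ ≤ C →
      ∀ t : ℝ, 0 < t → ‖f t‖ ≤ M / 2 * Real.exp ((δ / p + η) * t) := by
    intro f hf hf0 t ht
    refine (hf.norm_le hp hf0 ht.le).trans ?_
    have e1 : 1 ≤ Real.exp (δ * t / p) := Real.one_le_exp (by positivity)
    have e2 : 1 ≤ Real.exp (η * t) := Real.one_le_exp (by positivity)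
    have e3 : t ≤ 1 / η * Real.exp (η * t) := by
      have := Real.add_one_le_exp (η * t)
      rw [one_div, inv_mul_eq_div, le_div_iff₀ hη0]
      linarith
    have e4 : Real.exp ((δ / p + η) * t) = Real.exp (δ * t / p) * Real.exp (η * t) := by
      rw [← Real.exp_add]; congr 1; ring
    rw [e4]
    calc C + Real.exp (δ * t / p) * (t + C)
        ≤ Real.exp (δ * t / p) * C + Real.exp (δ * t / p) * (t + C) := by
          gcongr; exact le_mul_of_one_le_left hC e1
      _ = Real.exp (δ * t / p) * (t + 2 * C) := by ring
      _ ≤ Real.exp (δ * t / p) * (1 / η * Real.exp (η * t) + 2 * C * Real.exp (η * t)) := by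
          have e5 : 2 * C ≤ 2 * C * Real.exp (η * t) := le_mul_of_one_le_right (by positivity) e2
          gcongr
      _ = _ := by rw [hM]; ring
  have hbound : ∀ k, ∀ t ∈ Ioi (0:ℝ), ENNReal.ofReal (‖γ k t - g t‖ ^ r * Real.exp (-δ * t)) ≤
      ENNReal.ofReal (M ^ r * Real.exp (-κ * t)) := by
    intro k t ht
    apply ENNReal.ofReal_le_ofReal
    have h1 : ‖γ k t - g t‖ ≤ M * Real.exp ((δ / p + η) * t) := by
      have := hgrow (γ k) (hmod k) (h0 k) t ht
      have := hgrow g hgmod hg0 t ht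
      have := norm_sub_le (γ k t) (g t)
      linarith
    calc ‖γ k t - g t‖ ^ r * Real.exp (-δ * t)
        ≤ (M * Real.exp ((δ / p + η) * t)) ^ r * Real.exp (-δ * t) := by gcongr
      _ = M ^ r * Real.exp (-κ * t) := by
          rw [Real.mul_rpow hM0 (Real.exp_pos _).le, ← Real.exp_mul, mul_assoc, ← Real.exp_add]
          congr 2
          rw [hκ]; ring
  have hzero : ∫⁻ _ in Ioi (0:ℝ), (0 : ENNReal) = 0 := lintegral_zero
  rw [← hzero]
  refine tendsto_lintegral_of_dominated_convergence'
    (fun t => ENNReal.ofReal (M ^ r * Real.exp (-κ * t))) (fun k => ?_)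
    (fun k => (ae_restrict_iff' measurableSet_Ioi).2 (Eventually.of_forall (hbound k))) ?_ ?_
  · have c1 : ContinuousOn (fun t => γ k t - g t) (Ioi 0) :=
      (((hmod k).continuousOn hp).mono Ioi_subset_Ici_self).sub hgc.continuousOn
    have c2 : ContinuousOn (fun t => ‖γ k t - g t‖ ^ r * Real.exp (-δ * t)) (Ioi 0) :=
      ContinuousOn.mul (c1.norm.rpow_const fun _ _ => Or.inr hr0.le) (by fun_prop)
    exact (c2.aemeasurable measurableSet_Ioi).ennreal_ofReal
  · have hi : IntegrableOn (fun t => M ^ r * Real.exp (-κ * t)) (Ioi 0) :=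
      (exp_neg_integrableOn_Ioi 0 hκ0).const_mul _
    exact hi.lintegral_lt_top.ne
  · filter_upwards [ae_restrict_mem measurableSet_Ioi] with t ht
    have h1 : Tendsto (fun k => ‖γ k t - g t‖) atTop (nhds 0) :=
      tendsto_iff_norm_sub_tendsto_zero.1 (hlim t (mem_Ioi.1 ht).le)
    have h2 := (h1.rpow_const (Or.inr hr0.le)).mul_const (Real.exp (-δ * t))
    rw [Real.zero_rpow hr0.ne', zero_mul] at h2
    have h3 := (ENNReal.continuous_ofReal.tendsto _).comp h2
    rwa [ENNReal.ofReal_zero] at h3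

/-- Compactness for paths in `AC_{p,δ}(ℝ^d)`: a sequence with bounded initial points and
uniformly bounded discounted kinetic energy has a subsequence converging locally
uniformly on `[0,∞)` to some `AC_{p,δ}` path `γ`, with weighted `L^r` convergence
for every `1 ≤ r < p`. -/
theorem AC_compactness {d : ℕ} (p δ : ℝ) (hp : 1 < p) (hδ : 0 < δ) (C : ℝ)
    (γ γ' : ℕ → ℝ → EuclideanSpace ℝ (Fin d))
    (hFTC : ∀ k, ∀ s t : ℝ, 0 ≤ s → s ≤ t →
      IntervalIntegrable (γ' k) volume s t ∧ γ k t - γ k s = ∫ r in s..t, γ' k r)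
    (h0 : ∀ k, ‖γ k 0‖ ≤ C)
    (henergy : ∀ k,
      ∫⁻ t in Set.Ioi (0:ℝ), ENNReal.ofReal (Real.exp (-δ * t) * ‖γ' k t‖ ^ p)
        ≤ ENNReal.ofReal C) :
    ∃ (φ : ℕ → ℕ) (γlim γlim' : ℝ → EuclideanSpace ℝ (Fin d)),
      StrictMono φ ∧ IsACPath p δ γlim γlim' ∧
      (∀ K : Set ℝ, K ⊆ Set.Ici 0 → IsCompact K →
        TendstoUniformlyOn (fun j t => γ (φ j) t) γlim atTop K) ∧
      (∀ r : ℝ, 1 ≤ r → r < p →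
        Tendsto (fun j =>
            ∫⁻ t in Set.Ioi (0:ℝ),
              ENNReal.ofReal (‖γ (φ j) t - γlim t‖ ^ r * Real.exp (-δ * t)))
          atTop (nhds 0)) := by
  have hC : 0 ≤ C := (norm_nonneg _).trans (h0 0)
  have hp0 : 0 < p := by linarith
  have hmod : ∀ k, HasModulus p δ C (γ k) := fun k T lam s t hl hs ht =>
    dist_le_modulus hp hδ hC (hFTC k) (henergy k) hl hs ht
  obtain ⟨φ, g, hφ, hgc, hunif⟩ := exists_subseq_tendstoUniformlyOn hp hmod h0
  have hpt : ∀ t : ℝ, 0 ≤ t → Tendsto (fun j => γ (φ j) t) atTop (nhds (g t)) := fun t ht =>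
    (hunif {t} (by simpa using ht) isCompact_singleton).tendsto_at (mem_singleton t)
  have hAC : ∀ T : ℝ, 0 ≤ T → AbsolutelyContinuousOnInterval g 0 T := fun T hT =>
    absolutelyContinuous_of_tendsto hp hδ hC (fun j => hFTC (φ j)) (fun j => henergy (φ j)) hpt hT
  obtain ⟨g', hg'm, hg'FTC, hg'deriv⟩ := ftc_of_absolutelyContinuous hAC
  have hEn := lintegral_deriv_le hp hδ (fun j => hFTC (φ j)) (fun j => henergy (φ j))
    (fun j => (hmod (φ j)).continuousOn hp) hgc hpt hg'deriv
  have hgmod : HasModulus p δ C g := fun T lam s t hl hs ht =>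
    le_of_tendsto ((hpt s hs.1).dist (hpt t ht.1))
      (Eventually.of_forall fun j => hmod (φ j) T lam s t hl hs ht)
  have hg0 : ‖g 0‖ ≤ C :=
    le_of_tendsto (hpt 0 le_rfl).norm (Eventually.of_forall fun j => h0 (φ j))
  refine ⟨φ, g, g', hφ, ⟨hg'FTC, ?_⟩, hunif, fun r hr1 hrp => ?_⟩
  · have hm : Measurable fun t => Real.exp (-δ * t) * ‖g' t‖ ^ p :=
      Measurable.mul (by fun_prop) (hg'm.norm.pow_const p)
    refine ⟨hm.aestronglyMeasurable, ?_⟩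
    rw [hasFiniteIntegral_iff_ofReal (Eventually.of_forall fun t => by positivity)]
    exact hEn.trans_lt (ENNReal.mul_lt_top ENNReal.ofReal_lt_top ENNReal.ofReal_lt_top)
  · exact tendsto_lintegral_rpow hp hδ hC hr1 hrp (fun j => hmod (φ j)) (fun j => h0 (φ j))
      hgc hgmod hg0 hpt
end
end
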